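/- Let F/ℚ_p be totally ramified of degree e ≥ 2, so k = 𝔽_p, p ≥ 5, and let r ∈ ℤ/(p−1)ℤ be odd. Then the principal series V_{2,r} = Ind_{B_2}^{G_2} χ_r of G_2 = GL_2(O/m²) over a sufficiently large field E of characteristic p has exactly 2p Jordan–Hölder factors (with multiplicity): Sym^r E² occurs with multiplicity 3, det^r ⊗ Sym^{p−1−r} E² occurs with multiplicity 3, and for each i ∈ {1,...,p−2} with i ∉ {r mod (p−1)} interpreted in Ñ∖{0,r,p−1}, the weight det^i ⊗ Sym^{(r−2i)} E² occurs with multiplicity 2, where (r−2i) ∈ {0,...,p−1} is the representative of r−2i mod p−1. -/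

import Mathlib

/-!
The ring `R` is isomorphic to the dual numbers over the residue field `k`: writing
`x - x ^ p = ϖ * y`, the class `δ x` of `y` in `k` is a derivation over the residue map, and the
pair `(residue x, δ x)` determines `x` (`exists_delta`). A function in the induced representation
depends only on the bottom row of a matrix, hence on the three coordinates `X`, `Y` (the reduction
of the bottom row) and `W = X δ(b) - Y δ(a)`, where `(a, b)` is the bottom row itself. It is then
just a function homogeneous of degree `r` under `(X, Y, W) ↦ (u X, u Y, u² W)`
(`mem_indRep_iff`). Right translation by `g` acts linearly on `(X, Y)` through the reduction of
`g`, and sends `W` to `det g * W` plus a quadratic form in `X` and `Y` (`Coords`, `coords`).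

Consequently the filtration by the degree `j < p` in `W` is stable. The functions `P(X, Y) W^j`
in the `j`-th layer have `P` of degree `≡ r - 2j` modulo `p - 1`; as functions on
`k² ∖ {0}` these form a principal series of `GL₂(k)` twisted by `det ^ j`, of dimension
`p + 1`. It has the forms of the lowest degree `s = s j ∈ {1, …, p - 2}` as a
subrepresentation, and the quotient is identified with the forms of degree `p - 1 - s`, twisted
by a power of the determinant, by the intertwining operator
`P ↦ ∑_v P(v) (v ∧ (X, Y)) ^ (p - 1 - s)` (`theta`); power sums over `k` show that this
operator kills the forms of degree `s` (`theta_low`) and is diagonal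
with binomial coefficients prime to `p` on representatives of the quotient (`theta_high`). This gives the `2p` graded pieces (`step_even`, `step_odd`), and
interpolation over `k` shows that the last step is the whole induced representation
(`filt_top`). Here `r` odd is what keeps `s j` away from `p - 1`.

It remains to count: as `j` runs over `p` consecutive integers, both `j` and `r - j` cover every
class modulo `p - 1` once, except that the classes of `0` and `r` respectively are covered twice
(`map_wt`).
-/

open Matrix

/-- The (left) action of `G` on functions `G → E` by right translation:
`(x • φ)(y) = φ(y x)`. -/
def rightTransl (E : Type) [Field E] {G : Type} [Group G] (x : G) : (G → E) →ₗ[E] (G → E) where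
  toFun φ := fun y => φ (y * x)
  map_add' _ _ := rfl
  map_smul' _ _ := rfl

/-- The induced representation `Ind_H^G χ`, modeled as the space of functions
`φ : G → E` with `φ(h g) = χ(h) φ(g)` for `h ∈ H`; the group `G` acts by right
translation.  (For `g ∈ G`, `v ∈ E`, the element `g ⊗ v` is the function supported on
`H g⁻¹` with value `χ(h) v` at `h g⁻¹`.) -/
def indRep (E : Type) [Field E] {G : Type} [Group G] (H : Subgroup G) (χ : G → E) :
    Submodule E (G → E) where
  carrier := {φ | ∀ h ∈ H, ∀ g, φ (h * g) = χ h * φ g}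
  add_mem' := by
    intro a b ha hb h hh g
    simp only [Pi.add_apply, ha h hh g, hb h hh g]
    ring
  zero_mem' := by
    intro h hh g
    simp
  smul_mem' := by
    intro c φ hφ h hh g
    simp only [Pi.smul_apply, smul_eq_mul, hφ h hh g]
    ring

open Classical in
/-- The element `g ⊗ v ∈ Ind_H^G χ`: the function supported on `H g⁻¹` taking the value
`χ(h) v` at `h g⁻¹`. -/
noncomputable def elemTensor (E : Type) [Field E] {G : Type} [Group G] (H : Subgroup G)
    (χ : G → E) (g : G) (v : E) : G → E :=
  fun y => if y * g ∈ H then χ (y * g) * v else 0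

/-- The invertible matrix `(λ 1; 1 0)` (of determinant `−1`). -/
noncomputable def matL (R : Type) [CommRing R] (lam : R) : GL (Fin 2) R :=
  ((Matrix.isUnit_iff_isUnit_det !![lam, 1; 1, 0]).mpr
    (by rw [Matrix.det_fin_two_of]; simp)).unit

/-- The character `χ_r` of the Borel subgroup of `GL₂(R)` for a local ring `R`:
`(a b; 0 d) ↦ (residue d)^r`, with values in an extension `E` of the residue field. -/
noncomputable def chiR (R E : Type) [CommRing R] [IsLocalRing R] [Field E]
    [Algebra (IsLocalRing.ResidueField R) E] (r : ℕ) : GL (Fin 2) R → E :=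
  fun g => algebraMap (IsLocalRing.ResidueField R) E
    (IsLocalRing.residue R ((g : Matrix (Fin 2) (Fin 2) R) 1 1) ^ r)

/-- The action of a matrix `g` on polynomials in two variables:
`(g·P)(X,Y) = P(aX + cY, bX + dY)`, i.e. `X_j ↦ Σ_i g i j · X_i`. -/
noncomputable def polyAct (E : Type) [Field E] (g : Matrix (Fin 2) (Fin 2) E) :
    MvPolynomial (Fin 2) E →ₗ[E] MvPolynomial (Fin 2) E :=
  (MvPolynomial.aeval (fun j : Fin 2 =>
    ∑ i : Fin 2, MvPolynomial.C (g i j) * MvPolynomial.X i)).toLinearMap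

/-- The representative in `{1, …, q−1}` of a class in `ℤ/(q−1)ℤ`. -/
def grpRep (q : ℕ) (x : ℤ) : ℕ := ((x - 1) % ((q : ℤ) - 1)).toNat + 1

/-- The reduction of `g ∈ GL₂(R)` to a matrix over `E` (via the residue field `k` of the
local ring `R` and the embedding `k → E`). -/
noncomputable def matE (R E : Type) [CommRing R] [IsLocalRing R] [Field E]
    [Algebra (IsLocalRing.ResidueField R) E] (g : GL (Fin 2) R) :
    Matrix (Fin 2) (Fin 2) E :=
  ((g : Matrix (Fin 2) (Fin 2) R).map (IsLocalRing.residue R)).map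
    (algebraMap (IsLocalRing.ResidueField R) E)


namespace PrincipalSeries

/-! ### Binary forms and power sums over the residue field -/

section Forms

variable {k E : Type} [Field k] [Field E] [Algebra k E]

/-- The monomial `X^a Y^b` in two variables. -/
noncomputable def mon (E : Type) [Field E] (a b : ℕ) : MvPolynomial (Fin 2) E :=
  MvPolynomial.X 0 ^ a * MvPolynomial.X 1 ^ b

lemma mon_homog (a b : ℕ) : (mon E a b).IsHomogeneous (a + b) := by
  simpa [mon] using ((MvPolynomial.isHomogeneous_X E (0 : Fin 2)).pow a).mul
    ((MvPolynomial.isHomogeneous_X E (1 : Fin 2)).pow b)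

lemma mon_eq_monomial (d : Fin 2 →₀ ℕ) : MvPolynomial.monomial d (1 : E) = mon E (d 0) (d 1) := by
  rw [MvPolynomial.monomial_eq, Finsupp.prod_fintype _ _ (by simp)]
  simp [mon, Fin.prod_univ_two]

lemma homog_mem_span {n : ℕ} {P : MvPolynomial (Fin 2) E} (hP : P.IsHomogeneous n) :
    P ∈ Submodule.span E {Q | ∃ a b, a + b = n ∧ Q = mon E a b} := by
  rw [P.as_sum]
  refine Submodule.sum_mem _ fun d hd => ?_
  have h1 : d.degree = n := by
    by_contra h
    exact (MvPolynomial.mem_support_iff.mp hd) (hP.coeff_eq_zero h)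
  have : MvPolynomial.monomial d (P.coeff d) = P.coeff d • MvPolynomial.monomial d (1 : E) := by
    rw [MvPolynomial.smul_monomial, smul_eq_mul, mul_one]
  rw [this, mon_eq_monomial]
  refine Submodule.smul_mem _ _ (Submodule.subset_span ⟨_, _, ?_, rfl⟩)
  rw [← h1, Finsupp.degree_eq_sum, Fin.sum_univ_two]

lemma homog_eq_sum {n : ℕ} {P : MvPolynomial (Fin 2) E} (hP : P.IsHomogeneous n) :
    ∃ c : Fin (n + 1) → E, P = ∑ i, c i • mon E (n - i) i := by
  have h := homog_mem_span hP
  have h2 : P ∈ Submodule.span E (Set.range fun i : Fin (n + 1) => mon E (n - i) i) := by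
    refine Submodule.span_mono ?_ h
    rintro _ ⟨a, b, hab, rfl⟩
    refine ⟨⟨b, by omega⟩, ?_⟩
    simp only
    rw [show n - b = a by omega]
  obtain ⟨c, hc⟩ := (Submodule.mem_span_range_iff_exists_fun E).mp h2
  exact ⟨c, hc.symm⟩

lemma coeff_zero_of_sum_mon {n : ℕ} {c : Fin (n + 1) → E}
    (h : ∑ i, c i • mon E (n - i) i = 0) (i : Fin (n + 1)) : c i = 0 := by
  have hm : ∀ a b : ℕ, mon E a b =
      MvPolynomial.monomial (Finsupp.single 0 a + Finsupp.single 1 b) (1 : E) := by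
    intro a b
    rw [mon_eq_monomial]
    simp
  have h1 := congrArg (MvPolynomial.coeff
    (Finsupp.single (0 : Fin 2) (n - i) + Finsupp.single 1 (i : ℕ))) h
  rw [MvPolynomial.coeff_sum, Finset.sum_eq_single i] at h1
  · simpa [hm, MvPolynomial.coeff_smul] using h1
  · intro j _ hj
    rw [MvPolynomial.coeff_smul, hm, MvPolynomial.coeff_monomial, if_neg, smul_zero]
    intro h2
    have := DFunLike.congr_fun h2 1
    simp at this
    exact hj (Fin.ext this)
  · simp

lemma eval_polyAct (M : Matrix (Fin 2) (Fin 2) E) (P : MvPolynomial (Fin 2) E) (v : Fin 2 → E) :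
    MvPolynomial.eval v (polyAct E M P) = MvPolynomial.eval (v ᵥ* M) P := by
  change MvPolynomial.eval v (MvPolynomial.aeval _ P) = _
  rw [MvPolynomial.aeval_def, MvPolynomial.eval_eval₂]
  have : ((MvPolynomial.eval v).comp (algebraMap E (MvPolynomial (Fin 2) E))) = RingHom.id E := by
    ext x; simp
  rw [this, MvPolynomial.eval₂_id]
  congr 2
  funext j
  simp [Matrix.vecMul, dotProduct, mul_comm]

lemma polyAct_homog (M : Matrix (Fin 2) (Fin 2) E) {n : ℕ} {P : MvPolynomial (Fin 2) E}
    (hP : P.IsHomogeneous n) : (polyAct E M P).IsHomogeneous n := by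
  have := hP.aeval (n := 1) (fun j : Fin 2 =>
    ∑ i : Fin 2, MvPolynomial.C (M i j) * MvPolynomial.X i) (fun j => by
      refine MvPolynomial.IsHomogeneous.sum _ _ _ fun i _ => ?_
      simpa using (MvPolynomial.isHomogeneous_C (Fin 2) (M i j)).mul
        (MvPolynomial.isHomogeneous_X E i))
  rwa [one_mul] at this

variable [Fintype k]

lemma unit_pow_congr {p : ℕ} (hk : Fintype.card k = p) {u : k} (hu : u ≠ 0) {m n : ℕ}
    (h : m ≡ n [MOD p - 1]) : u ^ m = u ^ n :=
  pow_eq_pow_of_modEq h (by rw [← hk]; exact FiniteField.pow_card_sub_one_eq_one u hu)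

/-- The power sums `∑ t^i` over the residue field, in the range of exponents needed. -/
lemma power_sum {p : ℕ} (hk : Fintype.card k = p) {i : ℕ} (hi : i < 2 * (p - 1)) :
    ∑ t : k, (algebraMap k E t) ^ i = if i = p - 1 then -1 else 0 := by
  have h0 : ∑ t : k, (algebraMap k E t) ^ i = algebraMap k E (∑ t : k, t ^ i) := by
    simp [map_sum]
  rw [h0]
  by_cases h : i < p - 1
  · rw [FiniteField.sum_pow_lt_card_sub_one k i (by rwa [hk]), if_neg h.ne, map_zero]
  classical
  have h1 : ∑ t : k, t ^ i = ∑ t : kˣ, (t : k) ^ i := by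
    rw [← Finset.sum_erase (s := Finset.univ) (a := (0 : k)) (by simp; omega)]
    symm
    refine Finset.sum_bij (fun t _ => (t : k)) (by simp) (by simp [Units.ext_iff]) ?_ (by simp)
    intro b hb
    exact ⟨Units.mk0 b (by simpa using hb), by simp, by simp⟩
  rw [h1, FiniteField.sum_pow_units, hk]
  have : (p - 1 ∣ i) ↔ i = p - 1 := by
    constructor
    · rintro ⟨m, rfl⟩
      have : m < 2 := by
        by_contra hm
        have := Nat.mul_le_mul_left (p - 1) (show 2 ≤ m by omega)
        omega
      interval_cases m
      · omega
      · simp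
    · rintro rfl; exact dvd_rfl
  simp only [this]
  split_ifs <;> simp

/-- Functions on the residue field are polynomial functions of degree less than `p`: the
coefficients of the polynomials representing indicator functions of points. -/
lemma exists_indicator {p : ℕ} (hp : 2 ≤ p) (hk : Fintype.card k = p) :
    ∃ K : k → ℕ → E, ∀ (t : k) (f : k → E),
      f t = ∑ s : k, ∑ a ∈ Finset.range p, f s * K s a * (algebraMap k E t) ^ a := by
  classical
  have h1 : ∀ s : k, ∃ c : ℕ → E, ∀ t : k,
      ∑ a ∈ Finset.range p, c a * (algebraMap k E t) ^ a = if t = s then 1 else 0 := by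
    intro s
    refine ⟨fun a => (if a = 0 then 1 else 0) -
      (-algebraMap k E s) ^ (p - 1 - a) * ((p - 1).choose a : ℕ), fun t => ?_⟩
    have h2 : (algebraMap k E t - algebraMap k E s) ^ (p - 1) = if t = s then 0 else 1 := by
      split_ifs with h
      · rw [h, sub_self, zero_pow (by omega)]
      · rw [← map_sub, ← map_pow, ← hk,
          FiniteField.pow_card_sub_one_eq_one _ (sub_ne_zero.mpr h), map_one]
    rw [sub_eq_add_neg, add_pow, show p - 1 + 1 = p by omega] at h2
    have h3 : ∑ a ∈ Finset.range p, (if a = 0 then (1 : E) else 0) * (algebraMap k E t) ^ a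
        = 1 := by
      rw [Finset.sum_eq_single 0] <;> simp <;> omega
    simp only [sub_mul, Finset.sum_sub_distrib, h3]
    rw [show (∑ a ∈ Finset.range p, (-algebraMap k E s) ^ (p - 1 - a) * ((p - 1).choose a : ℕ)
      * (algebraMap k E t) ^ a) = if t = s then 0 else 1 from by
        rw [← h2]; exact Finset.sum_congr rfl fun _ _ => by ring]
    split_ifs <;> simp
  choose K hK using h1
  refine ⟨K, fun t f => ?_⟩
  simp only [mul_assoc, ← Finset.mul_sum, hK]
  simp

/-- The intertwining operator from functions on the plane to binary forms of degree `n`: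
`P ↦ ∑_v P(v) (v ∧ (X, Y))^n`. -/
noncomputable def theta (k : Type) [Field k] [Fintype k] [Algebra k E] (n : ℕ)
    (P : MvPolynomial (Fin 2) E) : MvPolynomial (Fin 2) E :=
  ∑ v : Fin 2 → k, MvPolynomial.eval (fun i => algebraMap k E (v i)) P •
    (MvPolynomial.C (algebraMap k E (v 0)) * MvPolynomial.X 1 -
      MvPolynomial.C (algebraMap k E (v 1)) * MvPolynomial.X 0) ^ n

lemma theta_polyAct (n : ℕ) (M : Matrix (Fin 2) (Fin 2) k) (hM : M.det ≠ 0)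
    (P : MvPolynomial (Fin 2) E) :
    polyAct E (M.map (algebraMap k E)) (theta k n P) =
      (algebraMap k E M.det) ^ n • theta k n (polyAct E (M.map (algebraMap k E)) P) := by
  let e : (Fin 2 → k) ≃ (Fin 2 → k) :=
    { toFun := fun v => v ᵥ* M
      invFun := fun v => v ᵥ* M⁻¹
      left_inv := fun v => by
        simp [Matrix.vecMul_vecMul, Matrix.mul_nonsing_inv _ (isUnit_iff_ne_zero.mpr hM)]
      right_inv := fun v => by
        simp [Matrix.vecMul_vecMul, Matrix.nonsing_inv_mul _ (isUnit_iff_ne_zero.mpr hM)] }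
  have he : ∀ v, e v = v ᵥ* M := fun _ => rfl
  unfold theta
  rw [← Equiv.sum_comp e, map_sum, Finset.smul_sum]
  refine Finset.sum_congr rfl fun v _ => ?_
  rw [map_smul, smul_comm, eval_polyAct]
  congr 1
  · congr 2
    funext j
    simp [he, Matrix.vecMul, dotProduct]
  · change MvPolynomial.aeval _ _ = _
    rw [← smul_pow, map_pow]
    congr 1
    simp only [map_sub, map_mul, MvPolynomial.aeval_X, MvPolynomial.algHom_C, he, Matrix.vecMul,
      dotProduct, Fin.sum_univ_two, Matrix.det_fin_two, map_add, MvPolynomial.smul_eq_C_mul,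
      Matrix.map_apply, MvPolynomial.algebraMap_eq]
    ring

lemma theta_mon (n a b : ℕ) : theta k n (mon E a b) =
    ∑ i : Fin (n + 1), ((n.choose i : E) * (-1) ^ (n - i) *
      ((∑ t : k, (algebraMap k E t) ^ (a + i)) *
        (∑ t : k, (algebraMap k E t) ^ (b + (n - i))))) • mon E (n - i) i := by
  unfold theta
  have h0 : ∀ f : (Fin 2 → k) → MvPolynomial (Fin 2) E,
      ∑ v, f v = ∑ x : k, ∑ y : k, f ![x, y] := fun f => by
    rw [← Equiv.sum_comp (finTwoArrowEquiv k).symm, Fintype.sum_prod_type]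
    rfl
  rw [h0]
  have h : ∀ x y : k, MvPolynomial.eval (fun i => algebraMap k E (![x, y] i)) (mon E a b) •
      (MvPolynomial.C (algebraMap k E (![x, y] 0)) * MvPolynomial.X 1 -
      MvPolynomial.C (algebraMap k E (![x, y] 1)) * MvPolynomial.X 0) ^ n
      = ∑ i : Fin (n + 1), ((n.choose i : E) * (-1) ^ (n - i) *
      ((algebraMap k E x) ^ (a + i) * (algebraMap k E y) ^ (b + (n - i)))) • mon E (n - i) i := by
    intro x y
    rw [sub_eq_add_neg, add_pow, Finset.sum_range, Finset.smul_sum]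
    refine Finset.sum_congr rfl fun i _ => ?_
    simp only [mon, MvPolynomial.smul_eq_C_mul, map_mul, map_pow,
      MvPolynomial.eval_X, map_neg, map_one, map_natCast,
      Matrix.cons_val_zero, Matrix.cons_val_one]
    rw [neg_pow]
    ring
  simp only [h]
  have h2 : ∀ i : Fin (n + 1), ((∑ t : k, (algebraMap k E t) ^ (a + i)) *
        (∑ t : k, (algebraMap k E t) ^ (b + (n - i)))) = ∑ x : k, ∑ y : k,
        (algebraMap k E x) ^ (a + i) * (algebraMap k E y) ^ (b + (n - i)) := fun i =>
    Finset.sum_mul_sum _ _ _ _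
  simp only [h2, Finset.mul_sum, Finset.sum_smul]
  rw [Finset.sum_comm (s := (Finset.univ : Finset (Fin (n + 1))))]
  refine Finset.sum_congr rfl fun x _ => ?_
  rw [Finset.sum_comm (s := (Finset.univ : Finset (Fin (n + 1))))]

/-- `theta` kills the forms of degree `s`, where `n + s = p - 1`. -/
lemma theta_low {p : ℕ} (hp : 2 ≤ p) (hk : Fintype.card k = p) {n a b : ℕ}
    (h : a + b + n = p - 1) : theta k n (mon E a b) = 0 := by
  rw [theta_mon]
  refine Finset.sum_eq_zero fun i _ => ?_
  have hi := i.2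
  rw [power_sum hk (by omega), power_sum hk (by omega)]
  split_ifs <;> first | omega | simp

/-- On the monomials of degree `s + (p - 1)` with exponents at most `p - 1`, where
`n + s = p - 1`, `theta` is diagonal with nonzero entries (up to reindexing). -/
lemma theta_high {p : ℕ} (hp : 2 ≤ p) (hk : Fintype.card k = p) {n s : ℕ}
    (h : s + n = p - 1) (hs : 1 ≤ s) (i : Fin (n + 1)) :
    theta k n (mon E (p - 1 - i) (s + i)) =
      ((n.choose i : E) * (-1) ^ (n - i)) • mon E (n - i) i := by
  rw [theta_mon, Finset.sum_eq_single i]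
  · have hi := i.2
    rw [power_sum hk (by omega), power_sum hk (by omega), if_pos (by omega),
      if_pos (by omega)]
    simp
  · intro j _ hj
    have hi := i.2
    have hj2 := j.2
    have hj3 : (j : ℕ) ≠ i := fun h => hj (Fin.ext h)
    rw [power_sum hk (by omega), if_neg (by omega)]
    simp
  · simp

lemma binom_sign_ne_zero {p : ℕ} [Fact p.Prime] [CharP E p] {n : ℕ} (hn : n < p)
    (i : Fin (n + 1)) : (n.choose i : E) * (-1) ^ (n - i) ≠ 0 := by
  refine mul_ne_zero ?_ (pow_ne_zero _ (by simp))
  rw [Ne, CharP.cast_eq_zero_iff E p]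
  intro h
  have h2 : p ∣ n.factorial := by
    rw [← Nat.choose_mul_factorial_mul_factorial (show (i : ℕ) ≤ n by have := i.2; omega)]
    exact (h.mul_right _).mul_right _
  have := ((Fact.out : p.Prime).dvd_factorial).mp h2
  omega

end Forms

/-! ### The filtration in coordinates -/

/-- Coordinates on a group `G` playing the role of `GL₂(R)`: `(X, Y)` is the reduction of the
bottom row, `W` is the determinant of the reduction of the bottom row against its
`ϖ`-component, and `M` is the reduction of the whole matrix. Right translation acts linearly on
`(X, Y)` through `M`, and on `W` by `det M` up to a quadratic form in `X, Y` with coefficients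
`α, β, γ`. The function `σ` chooses a group element with prescribed coordinates. -/
structure Coords (k G : Type) [Field k] [Group G] where
  (X Y W : G → k)
  M : G → Matrix (Fin 2) (Fin 2) k
  (α β γ : G → k)
  σ : k → k → k → G
  det_ne : ∀ g, (M g).det ≠ 0
  X_mul : ∀ g h, X (g * h) = X g * M h 0 0 + Y g * M h 1 0
  Y_mul : ∀ g h, Y (g * h) = X g * M h 0 1 + Y g * M h 1 1
  W_mul : ∀ g h, W (g * h) = (M h).det * W g +
    (α h * X g ^ 2 + β h * (X g * Y g) + γ h * Y g ^ 2)
  XY_ne : ∀ g, X g ≠ 0 ∨ Y g ≠ 0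
  σ_spec : ∀ a b t, (a ≠ 0 ∨ b ≠ 0) → X (σ a b t) = a ∧ Y (σ a b t) = b ∧ W (σ a b t) = t

namespace Coords

variable {k E G : Type} [Field k] [Field E] [Algebra k E] [Group G] (C : Coords k G)

local notation "c" => algebraMap k E

/-- The function `P(X, Y) W^m` on `G`, as a linear function of the polynomial `P`. -/
noncomputable def pol (m : ℕ) : MvPolynomial (Fin 2) E →ₗ[E] (G → E) where
  toFun P := fun g => MvPolynomial.eval ![c (C.X g), c (C.Y g)] P * c (C.W g) ^ m
  map_add' P Q := by funext g; simp [add_mul]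
  map_smul' a P := by funext g; simp [mul_assoc]

lemma pol_apply (m : ℕ) (P : MvPolynomial (Fin 2) E) (g : G) :
    C.pol m P g = MvPolynomial.eval ![c (C.X g), c (C.Y g)] P * c (C.W g) ^ m := rfl

/-- The quadratic form by which right translation by `g` shifts the coordinate `W`. -/
noncomputable def quad (g : G) : MvPolynomial (Fin 2) E :=
  MvPolynomial.C (c (C.α g)) * MvPolynomial.X 0 ^ 2 +
    MvPolynomial.C (c (C.β g)) * (MvPolynomial.X 0 * MvPolynomial.X 1) +
    MvPolynomial.C (c (C.γ g)) * MvPolynomial.X 1 ^ 2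

lemma quad_homog (g : G) : (C.quad g : MvPolynomial (Fin 2) E).IsHomogeneous 2 := by
  have h0 := MvPolynomial.isHomogeneous_X E (0 : Fin 2)
  have h1 := MvPolynomial.isHomogeneous_X E (1 : Fin 2)
  have hC : ∀ a : E, (MvPolynomial.C a : MvPolynomial (Fin 2) E).IsHomogeneous 0 :=
    MvPolynomial.isHomogeneous_C _
  exact (((hC _).mul (h0.pow 2)).add ((hC _).mul (h0.mul h1))).add ((hC _).mul (h1.pow 2))

lemma pol_transl (m : ℕ) (P : MvPolynomial (Fin 2) E) (g : G) :
    rightTransl E g (C.pol m P) = ∑ i ∈ Finset.range (m + 1),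
      (c (C.M g).det ^ i * (m.choose i : E)) •
        C.pol i (polyAct E ((C.M g).map c) P * C.quad g ^ (m - i)) := by
  funext y
  rw [Finset.sum_apply]
  change C.pol m P (y * g) = _
  simp only [Pi.smul_apply, pol_apply, smul_eq_mul, map_mul, map_pow, eval_polyAct, C.W_mul,
    map_add]
  have h1 : ![c (C.X (y * g)), c (C.Y (y * g))] =
      ![c (C.X y), c (C.Y y)] ᵥ* (C.M g).map c := by
    funext j
    fin_cases j <;> simp [C.X_mul, C.Y_mul, Matrix.vecMul, dotProduct]
  have h2 : MvPolynomial.eval ![c (C.X y), c (C.Y y)] (C.quad g) =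
      c (C.α g) * c (C.X y) ^ 2 + c (C.β g) * (c (C.X y) * c (C.Y y)) +
        c (C.γ g) * c (C.Y y) ^ 2 := by
    simp [quad]
  rw [h1, h2, add_pow, Finset.mul_sum]
  exact Finset.sum_congr rfl fun i _ => by ring

variable (p r : ℕ) (s : ℕ → ℕ)

/-- The filtration. Step `2j` is spanned by the functions `P(X, Y) W^m` with `m < j`, and
step `2j + 1` has in addition the `P(X, Y) W^j` with `P` of the lowest possible degree `s j`.
The congruence ensures that these functions lie in the induced representation. -/
noncomputable def filt (E : Type) [Field E] [Algebra k E] (i : ℕ) : Submodule E (G → E) :=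
  Submodule.span E {ψ | ∃ (P : MvPolynomial (Fin 2) E) (d m : ℕ), P.IsHomogeneous d ∧
    d + 2 * m ≡ r [MOD p - 1] ∧ (2 * m + 1 < i ∨ (2 * m + 1 = i ∧ d = s m)) ∧ ψ = C.pol m P}

variable {p r s}

lemma filt_mono {i j : ℕ} (h : i ≤ j) : C.filt p r s E i ≤ C.filt p r s E j := by
  refine Submodule.span_mono ?_
  rintro _ ⟨P, d, m, h1, h2, h3, rfl⟩
  rcases Nat.lt_or_ge i j with h4 | h4
  · exact ⟨P, d, m, h1, h2, Or.inl (by omega), rfl⟩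
  · obtain rfl : i = j := by omega
    exact ⟨P, d, m, h1, h2, h3, rfl⟩

lemma filt_zero : C.filt p r s E 0 = ⊥ := by
  rw [filt, Submodule.span_eq_bot]
  rintro _ ⟨P, d, m, -, -, h, -⟩
  omega

/-- Modulo lower powers of `W`, right translation acts on `P(X, Y) W^m` through the natural
action on `P` twisted by `det^m`. -/
lemma transl_sub_mem {m d : ℕ} {P : MvPolynomial (Fin 2) E} (hP : P.IsHomogeneous d)
    (hd : d + 2 * m ≡ r [MOD p - 1]) (g : G) :
    rightTransl E g (C.pol m P) - C.pol m (c (C.M g).det ^ m • polyAct E ((C.M g).map c) P)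
      ∈ C.filt p r s E (2 * m) := by
  rw [pol_transl, Finset.sum_range_succ]
  simp only [Nat.choose_self, Nat.sub_self, pow_zero, mul_one, Nat.cast_one, map_smul,
    add_sub_cancel_right]
  refine Submodule.sum_mem _ fun i hi => Submodule.smul_mem _ _ (Submodule.subset_span ?_)
  rw [Finset.mem_range] at hi
  refine ⟨_, d + 2 * (m - i), i, (polyAct_homog _ hP).mul ((C.quad_homog g).pow (m - i)), ?_,
    Or.inl (by omega), rfl⟩
  rw [show d + 2 * (m - i) + 2 * i = d + 2 * m by omega]
  exact hd

lemma filt_stable (i : ℕ) (g : G) {ψ : G → E} (hψ : ψ ∈ C.filt p r s E i) :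
    rightTransl E g ψ ∈ C.filt p r s E i := by
  suffices h : C.filt p r s E i ≤ (C.filt p r s E i).comap (rightTransl E g) from h hψ
  refine Submodule.span_le.mpr ?_
  rintro _ ⟨P, d, m, h1, h2, h3, rfl⟩
  change rightTransl E g (C.pol m P) ∈ C.filt p r s E i
  have h4 := C.filt_mono (show 2 * m ≤ i by omega) (C.transl_sub_mem (s := s) h1 h2 g)
  have h5 : C.pol m (c (C.M g).det ^ m • polyAct E ((C.M g).map c) P) ∈ C.filt p r s E i :=
    Submodule.subset_span ⟨_, d, m, by
      simpa [MvPolynomial.smul_eq_C_mul] using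
        (MvPolynomial.isHomogeneous_C (Fin 2) (c (C.M g).det ^ m)).mul (polyAct_homog _ h1),
      h2, h3, rfl⟩
  simpa using Submodule.add_mem _ h4 h5

lemma filt_odd_decomp {j : ℕ} {ψ : G → E} (hψ : ψ ∈ C.filt p r s E (2 * j + 1)) :
    ∃ P : MvPolynomial (Fin 2) E, P.IsHomogeneous (s j) ∧
      ψ - C.pol j P ∈ C.filt p r s E (2 * j) := by
  have h : C.filt p r s E (2 * j + 1) ≤ C.filt p r s E (2 * j) ⊔
      (MvPolynomial.homogeneousSubmodule (Fin 2) E (s j)).map (C.pol j) := by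
    refine Submodule.span_le.mpr ?_
    rintro _ ⟨P, d, m, h1, h2, h3, rfl⟩
    rcases h3 with h3 | ⟨h3, rfl⟩
    · exact Submodule.mem_sup_left
        (Submodule.subset_span ⟨P, d, m, h1, h2, Or.inl (by omega), rfl⟩)
    · obtain rfl : m = j := by omega
      exact Submodule.mem_sup_right ⟨P, h1, rfl⟩
  obtain ⟨ψ₀, h0, _, ⟨P, hP, rfl⟩, rfl⟩ := Submodule.mem_sup.mp (h hψ)
  exact ⟨P, hP, by simpa using h0⟩

variable [Fintype k]

/-- The functional extracting the coefficient of `W^j` (up to sign) at the point `(a, b)`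
from a function of degree at most `j` in `W`. -/
noncomputable def lead (E : Type) [Field E] [Algebra k E] (p j : ℕ) (a b : k) :
    (G → E) →ₗ[E] E :=
  ∑ t : k, algebraMap k E t ^ (p - 1 - j) •
    (LinearMap.proj (R := E) (φ := fun _ : G => E) (C.σ a b t) : (G → E) →ₗ[E] E)

lemma lead_pol (hk : Fintype.card k = p) {j m : ℕ} (hj : j < p) (hm : m ≤ j) (a b : k)
    (hab : a ≠ 0 ∨ b ≠ 0) (P : MvPolynomial (Fin 2) E) :
    C.lead E p j a b (C.pol m P) =
      if m = j then - MvPolynomial.eval ![c a, c b] P else 0 := by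
  have h : C.lead E p j a b (C.pol m P) =
      MvPolynomial.eval ![c a, c b] P * ∑ t : k, c t ^ (p - 1 - j + m) := by
    simp only [lead, LinearMap.sum_apply, LinearMap.smul_apply, LinearMap.proj_apply, pol_apply,
      C.σ_spec a b _ hab, smul_eq_mul, Finset.mul_sum, pow_add]
    exact Finset.sum_congr rfl fun t _ => by ring
  have hp : 1 < p := hk ▸ Fintype.one_lt_card
  rw [h, power_sum hk (by omega)]
  by_cases hmj : m = j
  · rw [if_pos (by omega), if_pos hmj]; ring
  · rw [if_neg (by omega), if_neg hmj, mul_zero]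

lemma lead_eq_zero (hk : Fintype.card k = p) {j : ℕ} (hj : j < p) (a b : k)
    (hab : a ≠ 0 ∨ b ≠ 0) {ψ : G → E} (hψ : ψ ∈ C.filt p r s E (2 * j)) :
    C.lead E p j a b ψ = 0 := by
  suffices h : C.filt p r s E (2 * j) ≤ LinearMap.ker (C.lead E p j a b) from h hψ
  refine Submodule.span_le.mpr ?_
  rintro _ ⟨P, d, m, h1, h2, h3, rfl⟩
  change C.lead E p j a b _ = 0
  rw [C.lead_pol hk hj (by omega) a b hab, if_neg (by omega)]

/-! ### The sub-quotients of even index -/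

/-- The projection of step `2j + 1` of the filtration onto the forms of degree `n`
(with `n = s j`): it reads off the coefficients of the form `P` from the values of `P(x, 1)`. -/
noncomputable def projSym (E : Type) [Field E] [Algebra k E] (p j n : ℕ) :
    (G → E) →ₗ[E] MvPolynomial (Fin 2) E :=
  ∑ i : Fin (n + 1), (∑ x : k, algebraMap k E x ^ (p - 1 - (n - i)) •
    C.lead E p j x 1).smulRight
    (mon E (n - i) i)

lemma projSym_pol (hk : Fintype.card k = p) {j n : ℕ} (hj : j < p) (hn : n < p - 1)
    {P : MvPolynomial (Fin 2) E} (hP : P.IsHomogeneous n) :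
    C.projSym E p j n (C.pol j P) = P := by
  obtain ⟨a, rfl⟩ := homog_eq_sum hP
  simp only [projSym, LinearMap.sum_apply, LinearMap.smulRight_apply, LinearMap.smul_apply,
    C.lead_pol hk hj le_rfl _ _ (Or.inr one_ne_zero), if_true]
  refine Finset.sum_congr rfl fun i _ => ?_
  congr 1
  have h1 : ∀ x : k, MvPolynomial.eval ![c x, c 1] (∑ i, a i • mon E (n - i) i) =
      ∑ l : Fin (n + 1), a l * c x ^ (n - l) := by
    intro x
    simp [mon]
  simp only [h1, smul_eq_mul, mul_neg, Finset.mul_sum, Finset.sum_neg_distrib]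
  rw [Finset.sum_comm]
  have h2 : ∀ l : Fin (n + 1), ∑ x : k, c x ^ (p - 1 - (n - i)) * (a l * c x ^ (n - l)) =
      a l * ∑ x : k, c x ^ (p - 1 - (n - i) + (n - l)) := by
    intro l
    rw [Finset.mul_sum]
    exact Finset.sum_congr rfl fun x _ => by ring
  have hi := i.2
  rw [Finset.sum_eq_single i]
  · rw [h2, power_sum hk (by omega), if_pos (by omega)]
    ring
  · intro l _ hl
    have hl2 := l.2
    have hl3 : (l : ℕ) ≠ i := fun h => hl (Fin.ext h)
    rw [h2, power_sum hk (by omega), if_neg (by omega), mul_zero]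
  · simp

lemma projSym_eq_zero (hk : Fintype.card k = p) {j n : ℕ} (hj : j < p) {ψ : G → E}
    (hψ : ψ ∈ C.filt p r s E (2 * j)) : C.projSym E p j n ψ = 0 := by
  simp [projSym, LinearMap.sum_apply, C.lead_eq_zero hk hj _ _ (Or.inr one_ne_zero) hψ]

lemma step_even (hk : Fintype.card k = p) {j : ℕ} (hj : j < p) (hn : s j < p - 1)
    (hs : s j + 2 * j ≡ r [MOD p - 1]) {m : ℕ} (hm : m ≡ j [MOD p - 1]) :
    (∀ ψ ∈ C.filt p r s E (2 * j + 1),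
      C.projSym E p j (s j) ψ ∈ MvPolynomial.homogeneousSubmodule (Fin 2) E (s j)) ∧
    (∀ ψ ∈ C.filt p r s E (2 * j + 1),
      (C.projSym E p j (s j) ψ = 0 ↔ ψ ∈ C.filt p r s E (2 * j))) ∧
    (∀ P ∈ MvPolynomial.homogeneousSubmodule (Fin 2) E (s j),
      ∃ ψ ∈ C.filt p r s E (2 * j + 1), C.projSym E p j (s j) ψ = P) ∧
    (∀ ψ ∈ C.filt p r s E (2 * j + 1), ∀ g, C.projSym E p j (s j) (rightTransl E g ψ) =
      ((C.M g).map c).det ^ m • polyAct E ((C.M g).map c) (C.projSym E p j (s j) ψ)) := by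
  have key : ∀ ψ ∈ C.filt p r s E (2 * j + 1), ∃ P : MvPolynomial (Fin 2) E,
      P.IsHomogeneous (s j) ∧ ψ - C.pol j P ∈ C.filt p r s E (2 * j) ∧
      C.projSym E p j (s j) ψ = P := by
    intro ψ hψ
    obtain ⟨P, hP, h⟩ := C.filt_odd_decomp hψ
    have h1 := C.projSym_eq_zero (n := s j) hk hj h
    rw [map_sub, C.projSym_pol hk hj hn hP, sub_eq_zero] at h1
    exact ⟨P, hP, h, h1⟩
  refine ⟨fun ψ hψ => ?_, fun ψ hψ => ⟨fun h => ?_, fun h => C.projSym_eq_zero hk hj h⟩,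
    fun P hP => ?_, fun ψ hψ g => ?_⟩
  · obtain ⟨P, hP, -, h⟩ := key ψ hψ
    rw [h]; exact hP
  · obtain ⟨P, -, h1, h2⟩ := key ψ hψ
    rw [h] at h2
    simpa [← h2] using h1
  · exact ⟨C.pol j P, Submodule.subset_span ⟨P, s j, j, hP, hs, Or.inr ⟨rfl, rfl⟩, rfl⟩,
      C.projSym_pol hk hj hn hP⟩
  · obtain ⟨P, hP, h1, h2⟩ := key ψ hψ
    have h3 := C.projSym_eq_zero (n := s j) hk hj (C.filt_stable _ g h1)
    have h4 := C.projSym_eq_zero (n := s j) hk hj (C.transl_sub_mem (s := s) hP hs g)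
    have h5 : (c (C.M g).det ^ j • polyAct E ((C.M g).map c) P).IsHomogeneous (s j) := by
      simpa [MvPolynomial.smul_eq_C_mul] using
        (MvPolynomial.isHomogeneous_C (Fin 2) (c (C.M g).det ^ j)).mul (polyAct_homog _ hP)
    rw [map_sub, C.projSym_pol hk hj hn h5, sub_eq_zero] at h4
    rw [map_sub, map_sub, h4, sub_eq_zero] at h3
    rw [h2, h3, ← map_pow, unit_pow_congr hk (C.det_ne g) hm.symm, map_pow, RingHom.map_det]
    rfl

/-! ### The sub-quotients of odd index -/

/-- The projection of step `2j + 2` of the filtration onto the forms of degree `n`, where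
`n + s j = p - 1`: the operator `theta` applied to the leading coefficient in `W`. -/
noncomputable def projQuot (E : Type) [Field E] [Algebra k E] (p j n : ℕ) :
    (G → E) →ₗ[E] MvPolynomial (Fin 2) E :=
  ∑ v : Fin 2 → k, (C.lead E p j (v 0) (v 1)).smulRight
    ((MvPolynomial.C (algebraMap k E (v 0)) * MvPolynomial.X 1 -
      MvPolynomial.C (algebraMap k E (v 1)) * MvPolynomial.X 0) ^ n)

lemma projQuot_pol (hk : Fintype.card k = p) {j m n : ℕ} (hj : j < p) (hm : m ≤ j) (hn : n ≠ 0)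
    (P : MvPolynomial (Fin 2) E) :
    C.projQuot E p j n (C.pol m P) = if m = j then - theta k n P else 0 := by
  have h : ∀ v : Fin 2 → k, (C.lead E p j (v 0) (v 1) (C.pol m P)) •
      ((MvPolynomial.C (c (v 0)) * MvPolynomial.X 1 -
        MvPolynomial.C (c (v 1)) * MvPolynomial.X 0) ^ n : MvPolynomial (Fin 2) E) =
      (if m = j then - MvPolynomial.eval (fun i => c (v i)) P else 0) •
      ((MvPolynomial.C (c (v 0)) * MvPolynomial.X 1 -
        MvPolynomial.C (c (v 1)) * MvPolynomial.X 0) ^ n) := by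
    intro v
    -- `σ` is unspecified at the origin, but there the linear form `v ∧ (X, Y)` vanishes
    by_cases hv : v 0 ≠ 0 ∨ v 1 ≠ 0
    · rw [C.lead_pol hk hj hm _ _ hv]
      have : ![c (v 0), c (v 1)] = fun i => c (v i) := by
        funext i; fin_cases i <;> rfl
      rw [this]
    · push Not at hv
      simp [hv.1, hv.2, hn]
  simp only [projQuot, LinearMap.sum_apply, LinearMap.smulRight_apply, h]
  split_ifs
  · simp [theta]
  · simp

lemma projQuot_eq_zero (hp : 2 ≤ p) (hk : Fintype.card k = p) {j n : ℕ} (hj : j < p)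
    (hn : n ≠ 0) (hns : s j + n = p - 1) {ψ : G → E}
    (hψ : ψ ∈ C.filt p r s E (2 * j + 1)) : C.projQuot E p j n ψ = 0 := by
  suffices h : C.filt p r s E (2 * j + 1) ≤ LinearMap.ker (C.projQuot E p j n) from h hψ
  refine Submodule.span_le.mpr ?_
  rintro _ ⟨P, d, m, h1, h2, h3, rfl⟩
  change C.projQuot E p j n _ = 0
  rw [C.projQuot_pol hk hj (by omega) hn]
  split_ifs with hm
  · obtain rfl : d = s j := by
      rcases h3 with h3 | ⟨-, rfl⟩
      · omega
      · rw [hm]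
    have h4 : Submodule.span E {Q | ∃ a b, a + b = s j ∧ Q = mon E a b} ≤
        LinearMap.ker (C.projQuot E p j n ∘ₗ C.pol j) := by
      refine Submodule.span_le.mpr ?_
      rintro _ ⟨a, b, hab, rfl⟩
      change C.projQuot E p j n (C.pol j _) = 0
      rw [C.projQuot_pol hk hj le_rfl hn, if_pos rfl, theta_low hp hk (by omega), neg_zero]
    have h5 : C.projQuot E p j n (C.pol j P) = 0 := h4 (homog_mem_span h1)
    rwa [C.projQuot_pol hk hj le_rfl hn, if_pos rfl] at h5
  · rfl

/-- On `k`, every power function agrees with one of exponent at most `p - 1`. -/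
lemma exists_reduced_exponent (hp : 2 ≤ p) (hk : Fintype.card k = p) (a : ℕ) :
    ∃ a' ≤ p - 1, a' ≡ a [MOD p - 1] ∧ ∀ x : k, x ^ a = x ^ a' := by
  rcases Nat.eq_zero_or_pos a with rfl | ha
  · exact ⟨0, by omega, rfl, fun _ => rfl⟩
  · have h1 : (a - 1) % (p - 1) + 1 ≡ a [MOD p - 1] := by
      have := (Nat.mod_modEq (a - 1) (p - 1)).add_right 1
      rwa [Nat.sub_add_cancel ha] at this
    refine ⟨(a - 1) % (p - 1) + 1, Nat.mod_lt _ (by omega), h1, fun x => ?_⟩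
    by_cases hx : x = 0
    · rw [hx, zero_pow (by omega), zero_pow (by omega)]
    · exact unit_pow_congr hk hx h1.symm

lemma filt_even_decomp (hp : 2 ≤ p) (hk : Fintype.card k = p) {j n : ℕ} (hs1 : 1 ≤ s j)
    (hn : n ≠ 0) (hns : s j + n = p - 1) (hs : s j + 2 * j ≡ r [MOD p - 1]) {ψ : G → E}
    (hψ : ψ ∈ C.filt p r s E (2 * j + 2)) :
    ∃ d : Fin (n + 1) → E, ψ - ∑ i, d i • C.pol j (mon E (p - 1 - i) (s j + i)) ∈
      C.filt p r s E (2 * j + 1) := by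
  set T : Submodule E (G → E) := C.filt p r s E (2 * j + 1) ⊔
      Submodule.span E (Set.range fun i : Fin (n + 1) =>
        C.pol (E := E) j (mon E (p - 1 - i) (s j + i))) with hT
  have hmon : ∀ a b d, a + b = d → d ≡ s j [MOD p - 1] → C.pol j (mon E a b) ∈ T := by
    intro a b d hab hd
    obtain ⟨a', ha, ha2, ha3⟩ := exists_reduced_exponent (k := k) hp hk a
    obtain ⟨b', hb, hb2, hb3⟩ := exists_reduced_exponent (k := k) hp hk b
    have h1 : C.pol j (mon E a b) = C.pol j (mon E a' b') := by
      funext g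
      simp only [pol_apply, mon, map_mul, map_pow, MvPolynomial.eval_X, Matrix.cons_val_zero,
        Matrix.cons_val_one]
      rw [← map_pow c (C.X g) a, ← map_pow c (C.Y g) b, ha3, hb3, map_pow, map_pow]
    rw [h1]
    have h2 : a' + b' ≡ s j [MOD p - 1] := (ha2.add hb2).trans (hab ▸ hd)
    have h3 : (a' + b') % (p - 1) = s j := by
      rw [h2, Nat.mod_eq_of_lt (by omega)]
    have h4 := Nat.div_add_mod (a' + b') (p - 1)
    have h5 : (a' + b') / (p - 1) < 2 := by
      by_contra h
      have := Nat.mul_le_mul_left (p - 1) (show 2 ≤ (a' + b') / (p - 1) by omega)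
      omega
    rw [h3] at h4
    interval_cases (a' + b') / (p - 1)
    · exact Submodule.mem_sup_left (Submodule.subset_span
        ⟨_, _, j, mon_homog a' b', by rwa [show a' + b' = s j by omega],
          Or.inr ⟨rfl, by omega⟩, rfl⟩)
    · refine Submodule.mem_sup_right (Submodule.subset_span ⟨⟨p - 1 - a', by omega⟩, ?_⟩)
      simp only
      congr 2 <;> omega
  have h : C.filt p r s E (2 * j + 2) ≤ T := by
    refine Submodule.span_le.mpr ?_
    rintro _ ⟨P, d, m, h1, h2, h3, rfl⟩
    by_cases hm : m = j
    · subst hm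
      have hd : d ≡ s m [MOD p - 1] := Nat.ModEq.add_right_cancel' (2 * m) (h2.trans hs.symm)
      have h4 : Submodule.span E {Q | ∃ a b, a + b = d ∧ Q = mon E a b} ≤
          T.comap (C.pol m) := by
        refine Submodule.span_le.mpr ?_
        rintro _ ⟨a, b, hab, rfl⟩
        exact hmon a b d hab hd
      exact h4 (homog_mem_span h1)
    · exact Submodule.mem_sup_left
        (Submodule.subset_span ⟨P, d, m, h1, h2, Or.inl (by omega), rfl⟩)
  obtain ⟨ψ₀, h0, ψ₁, h1, rfl⟩ := Submodule.mem_sup.mp (h hψ)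
  obtain ⟨d, rfl⟩ := (Submodule.mem_span_range_iff_exists_fun E).mp h1
  exact ⟨d, by simpa using h0⟩

lemma projQuot_sum (hp : 2 ≤ p) (hk : Fintype.card k = p) {j n : ℕ} (hj : j < p)
    (hs1 : 1 ≤ s j) (hn : n ≠ 0) (hns : s j + n = p - 1) (d : Fin (n + 1) → E) :
    C.projQuot E p j n (∑ i, d i • C.pol j (mon E (p - 1 - i) (s j + i))) =
      ∑ i, (- (d i * ((n.choose i : E) * (-1) ^ (n - i)))) • mon E (n - i) i := by
  simp only [map_sum, map_smul, C.projQuot_pol hk hj le_rfl hn, if_true,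
    theta_high hp hk hns hs1, smul_neg, neg_smul, smul_smul]

lemma step_odd [Fact p.Prime] [CharP E p] (hk : Fintype.card k = p) {j n : ℕ} (hj : j < p)
    (hs1 : 1 ≤ s j) (hn : n ≠ 0) (hns : s j + n = p - 1) (hs : s j + 2 * j ≡ r [MOD p - 1])
    {m : ℕ} (hm : m + n ≡ j [MOD p - 1]) :
    (∀ ψ ∈ C.filt p r s E (2 * j + 2),
      C.projQuot E p j n ψ ∈ MvPolynomial.homogeneousSubmodule (Fin 2) E n) ∧
    (∀ ψ ∈ C.filt p r s E (2 * j + 2),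
      (C.projQuot E p j n ψ = 0 ↔ ψ ∈ C.filt p r s E (2 * j + 1))) ∧
    (∀ P ∈ MvPolynomial.homogeneousSubmodule (Fin 2) E n,
      ∃ ψ ∈ C.filt p r s E (2 * j + 2), C.projQuot E p j n ψ = P) ∧
    (∀ ψ ∈ C.filt p r s E (2 * j + 2), ∀ g, C.projQuot E p j n (rightTransl E g ψ) =
      ((C.M g).map c).det ^ m • polyAct E ((C.M g).map c) (C.projQuot E p j n ψ)) := by
  have hp : 2 ≤ p := (Fact.out : p.Prime).two_le
  have key : ∀ ψ ∈ C.filt p r s E (2 * j + 2), ∃ d : Fin (n + 1) → E,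
      ψ - ∑ i, d i • C.pol j (mon E (p - 1 - i) (s j + i)) ∈ C.filt p r s E (2 * j + 1) ∧
      C.projQuot E p j n ψ =
        ∑ i, (- (d i * ((n.choose i : E) * (-1) ^ (n - i)))) • mon E (n - i) i := by
    intro ψ hψ
    obtain ⟨d, h⟩ := C.filt_even_decomp hp hk hs1 hn hns hs hψ
    have h1 := C.projQuot_eq_zero hp hk hj hn hns h
    rw [map_sub, C.projQuot_sum hp hk hj hs1 hn hns, sub_eq_zero] at h1
    exact ⟨d, h, h1⟩
  refine ⟨fun ψ hψ => ?_, fun ψ hψ => ⟨fun h => ?_,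
    fun h => C.projQuot_eq_zero hp hk hj hn hns h⟩, fun P hP => ?_, ?_⟩
  · obtain ⟨d, -, h⟩ := key ψ hψ
    rw [h]
    refine Submodule.sum_mem _ fun i _ => Submodule.smul_mem _ _ ?_
    have h2 := mon_homog (E := E) (n - i) i
    rwa [Nat.sub_add_cancel (by have := i.2; omega)] at h2
  · obtain ⟨d, h1, h2⟩ := key ψ hψ
    rw [h] at h2
    have h3 : ∀ i, d i = 0 := by
      intro i
      have := coeff_zero_of_sum_mon h2.symm i
      rw [neg_eq_zero, mul_eq_zero] at this
      exact this.resolve_right (binom_sign_ne_zero (p := p) (by omega) i)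
    simpa [h3] using h1
  · obtain ⟨a, rfl⟩ := homog_eq_sum hP
    refine ⟨∑ i, (- (a i * ((n.choose i : E) * (-1) ^ (n - i))⁻¹)) •
      C.pol j (mon E (p - 1 - i) (s j + i)), ?_, ?_⟩
    · refine Submodule.sum_mem _ fun i _ => Submodule.smul_mem _ _ (Submodule.subset_span
        ⟨_, _, j, mon_homog _ _, ?_, Or.inl (by omega), rfl⟩)
      have hi := i.2
      rw [show p - 1 - i + (s j + i) + 2 * j = (p - 1) + (s j + 2 * j) by omega]
      exact (Nat.ModEq.trans (by simp [Nat.ModEq]) hs)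
    · rw [C.projQuot_sum hp hk hj hs1 hn hns]
      refine Finset.sum_congr rfl fun i _ => ?_
      have h1 := binom_sign_ne_zero (E := E) (p := p) (n := n) (by omega) i
      rw [neg_mul, neg_neg, mul_assoc, inv_mul_cancel₀ h1, mul_one]
  · intro ψ hψ g
    suffices h : C.filt p r s E (2 * j + 2) ≤ LinearMap.eqLocus
        (C.projQuot E p j n ∘ₗ rightTransl E g)
        (((C.M g).map c).det ^ m • (polyAct E ((C.M g).map c) ∘ₗ C.projQuot E p j n)) from h hψ
    refine Submodule.span_le.mpr ?_
    rintro _ ⟨P, d, l, h1, h2, h3, rfl⟩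
    change C.projQuot E p j n (rightTransl E g (C.pol l P)) =
      ((C.M g).map c).det ^ m • polyAct E ((C.M g).map c) (C.projQuot E p j n (C.pol l P))
    have h4 := C.projQuot_eq_zero hp hk hj hn hns
      (C.filt_mono (show 2 * l ≤ 2 * j + 1 by omega) (C.transl_sub_mem (s := s) h1 h2 g))
    rw [map_sub, sub_eq_zero] at h4
    rw [h4, C.projQuot_pol hk hj (by omega) hn, C.projQuot_pol hk hj (by omega) hn]
    split_ifs with hl
    · have h5 : ((C.M g).map c).det = c (C.M g).det := (RingHom.map_det _ _).symm
      have h6 : ∀ (a : E) (Q : MvPolynomial (Fin 2) E), theta k n (a • Q) = a • theta k n Q := by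
        intro a Q
        simp [theta, Finset.smul_sum, mul_smul]
      rw [hl, map_neg, theta_polyAct n _ (C.det_ne g), h5, smul_neg, smul_smul, ← pow_add, h6,
        ← map_pow, ← map_pow, unit_pow_congr hk (C.det_ne g) hm]
    · simp

/-! ### The filtration exhausts the induced representation -/

lemma eval_smul_homog {d : ℕ} {P : MvPolynomial (Fin 2) E} (hP : P.IsHomogeneous d)
    (u x y : E) :
    MvPolynomial.eval ![u * x, u * y] P = u ^ d * MvPolynomial.eval ![x, y] P := by
  obtain ⟨a, rfl⟩ := homog_eq_sum hP
  simp only [map_sum, Finset.mul_sum, MvPolynomial.smul_eval, mon, map_mul, map_pow,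
    MvPolynomial.eval_X, Matrix.cons_val_zero, Matrix.cons_val_one]
  refine Finset.sum_congr rfl fun i _ => ?_
  have hi := i.2
  have : u ^ d = u ^ (d - i) * u ^ (i : ℕ) := by rw [← pow_add]; congr 1; omega
  rw [this, mul_pow, mul_pow]
  ring

/-- Let `V` be the space of functions on `G` which are homogeneous of degree `r` for the
scaling `(X, Y, W) ↦ (uX, uY, u²W)`. Where `Y ≠ 0` such a function is determined by its values
at `(x, 1, w)`, where `Y = 0` by its values at `(1, 0, w)`, and interpolation over the residue
field expresses it through the functions `X^a Y^d W^b` with `b < p`. -/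
lemma filt_top (hp : 2 ≤ p) (hk : Fintype.card k = p) {V : Submodule E (G → E)}
    (hV : ∀ ψ, ψ ∈ V ↔ ∀ (g g' : G) (u : k), u ≠ 0 → C.X g' = u * C.X g → C.Y g' = u * C.Y g →
      C.W g' = u ^ 2 * C.W g → ψ g' = c u ^ r * ψ g) :
    C.filt p r s E (2 * p) = V := by
  apply le_antisymm
  · refine Submodule.span_le.mpr ?_
    rintro _ ⟨P, d, m, h1, h2, -, rfl⟩
    rw [SetLike.mem_coe, hV]
    intro g g' u hu hX hY hW
    rw [pol_apply, pol_apply, hX, hY, hW, map_mul, map_mul, map_mul, map_pow,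
      eval_smul_homog h1, ← map_pow c u r, ← unit_pow_congr hk hu h2, map_pow, pow_add, pow_mul]
    ring
  · intro ψ hψ
    rw [hV] at hψ
    obtain ⟨K, hK⟩ := exists_indicator (E := E) hp hk
    have hmem : ∀ a d b, b < p → a + d + 2 * b ≡ r [MOD p - 1] →
        C.pol b (mon E a d) ∈ C.filt p r s E (2 * p) := fun a d b hb h =>
      Submodule.subset_span ⟨_, _, b, mon_homog a d, h, Or.inl (by omega), rfl⟩
    have hexp : ∀ n, r + (p - 1) * n ≡ r [MOD p - 1] := fun n => by simp [Nat.ModEq]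
    have hinv : ∀ u : k, u ≠ 0 → c u⁻¹ = c u ^ (p - 2) := by
      intro u hu
      rw [← map_pow]
      congr 1
      refine inv_eq_of_mul_eq_one_right ?_
      rw [← pow_succ', show p - 2 + 1 = Fintype.card k - 1 by omega]
      exact FiniteField.pow_card_sub_one_eq_one u hu
    have hone : ∀ u : k, u ≠ 0 → c u ^ (p - 1) = 1 := fun u hu => by
      rw [← map_pow, ← hk, FiniteField.pow_card_sub_one_eq_one u hu, map_one]
    have key : ψ =
        ∑ t : k, ∑ a ∈ Finset.range p, ∑ w : k, ∑ b ∈ Finset.range p,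
          (ψ (C.σ t 1 w) * K t a * K w b) •
            C.pol b (mon E a (r + (p - 2) * (a + 2 * b) + (p - 1))) +
        ∑ w : k, ∑ b ∈ Finset.range p, (ψ (C.σ 1 0 w) * K w b) •
          (C.pol b (mon E (r + (p - 2) * (2 * b)) 0) -
            C.pol b (mon E (r + (p - 2) * (2 * b)) (p - 1))) := by
      funext g
      simp only [Pi.add_apply, Finset.sum_apply, Pi.smul_apply, Pi.sub_apply, pol_apply, mon,
        map_mul, map_pow, MvPolynomial.eval_X, Matrix.cons_val_zero, Matrix.cons_val_one,
        smul_eq_mul, pow_zero, mul_one]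
      by_cases hY : C.Y g = 0
      · have hX : C.X g ≠ 0 := (C.XY_ne g).resolve_right (by simp [hY])
        have hσ := C.σ_spec 1 0 (C.W g * (C.X g)⁻¹ ^ 2) (Or.inl one_ne_zero)
        have e1 := hψ (C.σ 1 0 (C.W g * (C.X g)⁻¹ ^ 2)) g (C.X g) hX (by rw [hσ.1, mul_one])
          (by rw [hσ.2.1, mul_zero, hY]) (by rw [hσ.2.2]; field_simp)
        rw [e1, hK (C.W g * (C.X g)⁻¹ ^ 2) fun w => ψ (C.σ 1 0 w), ← zero_add (c (C.X g) ^ r * _)]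
        congr 1
        · symm
          refine Finset.sum_eq_zero fun t _ => Finset.sum_eq_zero fun a _ =>
            Finset.sum_eq_zero fun w _ => Finset.sum_eq_zero fun b _ => ?_
          rw [hY, map_zero, zero_pow (by omega)]
          ring
        · rw [Finset.mul_sum]
          refine Finset.sum_congr rfl fun w _ => ?_
          rw [Finset.mul_sum]
          refine Finset.sum_congr rfl fun b _ => ?_
          rw [hY, map_zero, zero_pow (show p - 1 ≠ 0 by omega), map_mul, map_pow, hinv _ hX]
          ring
      · have hσ := fun x => C.σ_spec x 1 (C.W g * (C.Y g)⁻¹ ^ 2) (Or.inr one_ne_zero)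
        have e1 := hψ (C.σ (C.X g * (C.Y g)⁻¹) 1 (C.W g * (C.Y g)⁻¹ ^ 2)) g (C.Y g) hY
          (by rw [(hσ _).1]; field_simp) (by rw [(hσ _).2.1, mul_one])
          (by rw [(hσ _).2.2]; field_simp)
        rw [e1, hK (C.X g * (C.Y g)⁻¹) fun t => ψ (C.σ t 1 (C.W g * (C.Y g)⁻¹ ^ 2)),
          Finset.sum_eq_zero (s := Finset.univ) (f := fun w => ∑ b ∈ Finset.range p,
            ψ (C.σ 1 0 w) * K w b * _), add_zero, Finset.mul_sum]
        · refine Finset.sum_congr rfl fun t _ => ?_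
          rw [Finset.mul_sum]
          refine Finset.sum_congr rfl fun a _ => ?_
          rw [hK (C.W g * (C.Y g)⁻¹ ^ 2) fun w => ψ (C.σ t 1 w), Finset.sum_mul, Finset.sum_mul,
            Finset.mul_sum]
          refine Finset.sum_congr rfl fun w _ => ?_
          rw [Finset.sum_mul, Finset.sum_mul, Finset.mul_sum]
          refine Finset.sum_congr rfl fun b _ => ?_
          rw [map_mul, map_mul, map_pow, hinv _ hY, pow_add _ _ (p - 1), hone _ hY]
          ring
        · intro w _
          refine Finset.sum_eq_zero fun b _ => ?_
          rw [hone _ hY]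
          ring
    rw [key]
    refine Submodule.add_mem _ ?_ ?_
    · refine Submodule.sum_mem _ fun t _ => Submodule.sum_mem _ fun a _ =>
        Submodule.sum_mem _ fun w _ => Submodule.sum_mem _ fun b hb =>
        Submodule.smul_mem _ _ (hmem _ _ _ (Finset.mem_range.mp hb) ?_)
      convert hexp (a + 2 * b + 1) using 1
      obtain ⟨q, rfl⟩ := Nat.exists_eq_add_of_le hp
      simp only [Nat.add_sub_cancel_left, show 2 + q - 1 = q + 1 by omega]
      ring
    · refine Submodule.sum_mem _ fun w _ => Submodule.sum_mem _ fun b hb =>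
        Submodule.smul_mem _ _ (Submodule.sub_mem _ (hmem _ _ _ (Finset.mem_range.mp hb) ?_)
          (hmem _ _ _ (Finset.mem_range.mp hb) ?_))
      · convert hexp (2 * b) using 1
        obtain ⟨q, rfl⟩ := Nat.exists_eq_add_of_le hp
        simp only [Nat.add_sub_cancel_left, show 2 + q - 1 = q + 1 by omega]
        ring
      · convert hexp (2 * b + 1) using 1
        obtain ⟨q, rfl⟩ := Nat.exists_eq_add_of_le hp
        simp only [Nat.add_sub_cancel_left, show 2 + q - 1 = q + 1 by omega]
        ring

end Coords

/-! ### The ring `R` as dual numbers -/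

/-- The ring `R` is isomorphic to the dual numbers over its residue field: besides the residue
map there is a derivation `δ` into the residue field, given by `x - x^p = ϖ δ(x)`, and the pair
`(residue x, δ x)` determines `x` and takes all values. -/
lemma exists_delta (p : ℕ) [Fact p.Prime] (R : Type) [CommRing R] [IsLocalRing R]
    (ϖ : R) (hspan : IsLocalRing.maximalIdeal R = Ideal.span {ϖ})
    (hnil : ϖ ^ 2 = 0) (hne : ϖ ≠ 0)
    (hfrob : ∀ a : IsLocalRing.ResidueField R, a ^ p = a) (hp0 : (p : R) = 0) :
    ∃ δ : R → IsLocalRing.ResidueField R,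
      (∀ a b, δ (a + b) = δ a + δ b) ∧
      (∀ a b, δ (a * b) = IsLocalRing.residue R a * δ b + IsLocalRing.residue R b * δ a) ∧
      (∀ a b, ∃ x, IsLocalRing.residue R x = a ∧ δ x = b) ∧
      (∀ x, IsLocalRing.residue R x = 0 → δ x = 0 → x = 0) := by
  have hp : p.Prime := Fact.out
  have : CharP R p := by
    obtain ⟨q, hq⟩ := CharP.exists R
    have h1 : q ∣ p := (CharP.cast_eq_zero_iff R q p).mp hp0
    rcases (Nat.dvd_prime hp).mp h1 with rfl | rfl
    · exact absurd rfl (CharP.char_ne_one R 1)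
    · exact hq
  have hdvd : ∀ x, IsLocalRing.residue R x = 0 → ∃ y, x = ϖ * y := by
    intro x hx
    rw [IsLocalRing.residue_eq_zero_iff, hspan] at hx
    exact Ideal.mem_span_singleton.mp hx
  have hϖ : IsLocalRing.residue R ϖ = 0 := by
    rw [IsLocalRing.residue_eq_zero_iff, hspan]
    exact Ideal.mem_span_singleton_self ϖ
  have hpow : ∀ y, (ϖ * y) ^ p = 0 := by
    intro y
    obtain ⟨q, hq⟩ := Nat.exists_eq_add_of_le hp.two_le
    rw [mul_pow, hq, pow_add, hnil]
    ring
  have hkill : ∀ y, IsLocalRing.residue R y = 0 → ϖ * y = 0 := by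
    intro y hy
    obtain ⟨z, rfl⟩ := hdvd y hy
    rw [← mul_assoc, ← sq, hnil, zero_mul]
  have huniq : ∀ y z, ϖ * y = ϖ * z → IsLocalRing.residue R y = IsLocalRing.residue R z := by
    intro y z h
    by_contra hyz
    rw [← sub_eq_zero, ← map_sub] at hyz
    have hu := (IsLocalRing.residue_ne_zero_iff_isUnit _).mp hyz
    have h2 : ϖ * (y - z) = 0 := by rw [mul_sub, h, sub_self]
    exact hne ((hu.mul_left_eq_zero).mp h2)
  have hex : ∀ x : R, ∃ y, x - x ^ p = ϖ * y := fun x =>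
    hdvd _ (by rw [map_sub, map_pow, hfrob, sub_self])
  choose y hy using hex
  refine ⟨fun x => IsLocalRing.residue R (y x), fun a b => ?_, fun a b => ?_, fun a b => ?_,
    fun x h1 h2 => ?_⟩
  · rw [← map_add]
    apply huniq
    rw [← hy, add_pow_char, mul_add, ← hy, ← hy]
    ring
  · have h : IsLocalRing.residue R (y (a * b)) = IsLocalRing.residue R (a ^ p * y b + b * y a) := by
      apply huniq
      rw [← hy, show ϖ * (a ^ p * y b + b * y a) = a ^ p * (ϖ * y b) + b * (ϖ * y a) by ring,
        ← hy, ← hy]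
      ring
    simp only [h, map_add, map_mul, map_pow, hfrob]
  · obtain ⟨x, rfl⟩ := IsLocalRing.residue_surjective a
    obtain ⟨z, rfl⟩ := IsLocalRing.residue_surjective b
    refine ⟨x ^ p + ϖ * z, by simp [hϖ, hfrob], huniq _ _ ?_⟩
    have h1 : (x - x ^ p) ^ p = 0 := by rw [hy, hpow]
    rw [sub_pow_char] at h1
    rw [← hy, add_pow_char, hpow]
    linear_combination h1
  · obtain ⟨z, rfl⟩ := hdvd x h1
    have h3 := hy (ϖ * z)
    rwa [hpow, sub_zero, hkill _ h2] at h3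

/-! ### Coordinates on `GL₂(R)` -/

section Group

variable {R : Type} [CommRing R] [IsLocalRing R]

local notation "res" => IsLocalRing.residue R

lemma exists_of_coords {δ : R → IsLocalRing.ResidueField R}
    (hsurj : ∀ a b, ∃ x, res x = a ∧ δ x = b) (a b t : IsLocalRing.ResidueField R)
    (hab : a ≠ 0 ∨ b ≠ 0) :
    ∃ g : GL (Fin 2) R, res (g.1 1 0) = a ∧ res (g.1 1 1) = b ∧
      res (g.1 1 0) * δ (g.1 1 1) - res (g.1 1 1) * δ (g.1 1 0) = t := by
  by_cases ha : a = 0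
  · have hb : b ≠ 0 := hab.resolve_left (by simp [ha])
    obtain ⟨x, hx, hx'⟩ := hsurj 0 (-(t / b))
    obtain ⟨y, hy, hy'⟩ := hsurj b 0
    have hu : IsUnit (!![1, 0; x, y] : Matrix (Fin 2) (Fin 2) R).det := by
      rw [Matrix.det_fin_two_of, ← IsLocalRing.residue_ne_zero_iff_isUnit]
      simpa [hy] using hb
    obtain ⟨g, hg⟩ := (Matrix.isUnit_iff_isUnit_det _).mpr hu
    refine ⟨g, ?_⟩
    rw [hg]
    simp only [Matrix.of_apply, Matrix.cons_val_zero, Matrix.cons_val_one, hx, hx', hy, hy', ha]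
    refine ⟨trivial, trivial, ?_⟩
    field_simp
    ring
  · obtain ⟨x, hx, hx'⟩ := hsurj a 0
    obtain ⟨y, hy, hy'⟩ := hsurj b (t / a)
    have hu : IsUnit (!![0, 1; x, y] : Matrix (Fin 2) (Fin 2) R).det := by
      rw [Matrix.det_fin_two_of, ← IsLocalRing.residue_ne_zero_iff_isUnit]
      simpa [hx] using ha
    obtain ⟨g, hg⟩ := (Matrix.isUnit_iff_isUnit_det _).mpr hu
    refine ⟨g, ?_⟩
    rw [hg]
    simp only [Matrix.of_apply, Matrix.cons_val_zero, Matrix.cons_val_one, hx, hx', hy, hy']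
    refine ⟨trivial, trivial, ?_⟩
    field_simp
    ring

lemma det_res (g : GL (Fin 2) R) :
    ((g : Matrix (Fin 2) (Fin 2) R).map res).det = res (g : Matrix (Fin 2) (Fin 2) R).det :=
  (RingHom.map_det _ _).symm

lemma det_res_ne (g : GL (Fin 2) R) : ((g : Matrix (Fin 2) (Fin 2) R).map res).det ≠ 0 := by
  rw [det_res, IsLocalRing.residue_ne_zero_iff_isUnit]
  exact (Matrix.isUnit_iff_isUnit_det _).mp g.isUnit

open Classical in
/-- The coordinates on `GL₂(R)` attached to a derivation `δ` from `R` to its residue field. -/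
noncomputable def coords (δ : R → IsLocalRing.ResidueField R)
    (hadd : ∀ a b, δ (a + b) = δ a + δ b)
    (hmul : ∀ a b, δ (a * b) = res a * δ b + res b * δ a)
    (hsurj : ∀ a b, ∃ x, res x = a ∧ δ x = b) :
    Coords (IsLocalRing.ResidueField R) (GL (Fin 2) R) where
  X g := res (g.1 1 0)
  Y g := res (g.1 1 1)
  W g := res (g.1 1 0) * δ (g.1 1 1) - res (g.1 1 1) * δ (g.1 1 0)
  M g := (g : Matrix (Fin 2) (Fin 2) R).map res
  α h := res (h.1 0 0) * δ (h.1 0 1) - res (h.1 0 1) * δ (h.1 0 0)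
  β h := res (h.1 0 0) * δ (h.1 1 1) + res (h.1 1 0) * δ (h.1 0 1) -
    res (h.1 0 1) * δ (h.1 1 0) - res (h.1 1 1) * δ (h.1 0 0)
  γ h := res (h.1 1 0) * δ (h.1 1 1) - res (h.1 1 1) * δ (h.1 1 0)
  σ a b t := if h : a ≠ 0 ∨ b ≠ 0 then (exists_of_coords hsurj a b t h).choose else 1
  det_ne g := det_res_ne g
  X_mul g h := by simp [Matrix.mul_apply, Fin.sum_univ_two]
  Y_mul g h := by simp [Matrix.mul_apply, Fin.sum_univ_two]
  W_mul g h := by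
    simp only [Units.val_mul, Matrix.mul_apply, Fin.sum_univ_two, map_add, map_mul, hadd, hmul,
      Matrix.det_fin_two, Matrix.map_apply]
    ring
  XY_ne g := by
    by_contra! h
    refine det_res_ne g ?_
    simp [Matrix.det_fin_two, h.1, h.2]
  σ_spec a b t h := by
    simp only [dif_pos h]
    exact (exists_of_coords hsurj a b t h).choose_spec

/-- The induced representation consists of the functions homogeneous of degree `r` in the
coordinates: two elements of `GL₂(R)` have coordinates related by a scaling exactly if they lie
in the same coset of the Borel subgroup. -/
lemma mem_indRep_iff {E : Type} [Field E] [Algebra (IsLocalRing.ResidueField R) E]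
    (δ : R → IsLocalRing.ResidueField R)
    (hadd : ∀ a b, δ (a + b) = δ a + δ b)
    (hmul : ∀ a b, δ (a * b) = res a * δ b + res b * δ a)
    (hsurj : ∀ a b, ∃ x, res x = a ∧ δ x = b)
    (hinj : ∀ x, res x = 0 → δ x = 0 → x = 0)
    {B : Subgroup (GL (Fin 2) R)}
    (hB : ∀ g : GL (Fin 2) R, g ∈ B ↔ (g : Matrix (Fin 2) (Fin 2) R) 1 0 = 0)
    (r : ℕ) (ψ : GL (Fin 2) R → E) :
    ψ ∈ indRep E B (chiR R E r) ↔
      ∀ (g g' : GL (Fin 2) R) (u : IsLocalRing.ResidueField R), u ≠ 0 →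
        (coords δ hadd hmul hsurj).X g' = u * (coords δ hadd hmul hsurj).X g →
        (coords δ hadd hmul hsurj).Y g' = u * (coords δ hadd hmul hsurj).Y g →
        (coords δ hadd hmul hsurj).W g' = u ^ 2 * (coords δ hadd hmul hsurj).W g →
        ψ g' = algebraMap (IsLocalRing.ResidueField R) E u ^ r * ψ g := by
  set C := coords δ hadd hmul hsurj with hC
  constructor
  · intro hψ g g' u hu hX hY hW
    obtain ⟨h, rfl⟩ : ∃ h, g' = h * g := ⟨g' * g⁻¹, by group⟩
    have hX1 : C.X (h * g) = res (h.1 1 0) * res (g.1 0 0) + res (h.1 1 1) * res (g.1 1 0) := by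
      simp [hC, coords, Matrix.mul_apply, Fin.sum_univ_two]
    have hY1 : C.Y (h * g) = res (h.1 1 0) * res (g.1 0 1) + res (h.1 1 1) * res (g.1 1 1) := by
      simp [hC, coords, Matrix.mul_apply, Fin.sum_univ_two]
    have hXg : C.X g = res (g.1 1 0) := rfl
    have hYg : C.Y g = res (g.1 1 1) := rfl
    have hd := det_res_ne g
    rw [Matrix.det_fin_two] at hd
    simp only [Matrix.map_apply] at hd
    have h10 : res (h.1 1 0) = 0 := by
      refine (mul_eq_zero.mp ?_).resolve_right hd
      rw [hX1, hXg] at hX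
      rw [hY1, hYg] at hY
      linear_combination res (g.1 1 1) * hX - res (g.1 1 0) * hY
    have h11 : res (h.1 1 1) = u := by
      rw [hX1, hXg, h10, zero_mul, zero_add] at hX
      rw [hY1, hYg, h10, zero_mul, zero_add] at hY
      rcases C.XY_ne g with h | h
      · exact mul_right_cancel₀ h hX
      · exact mul_right_cancel₀ h hY
    have h10' : δ (h.1 1 0) = 0 := by
      have hW1 : C.W (h * g) = res (h.1 1 1) ^ 2 * C.W g - res (h.1 1 1) * (δ (h.1 1 0) *
          (res (g.1 0 0) * res (g.1 1 1) - res (g.1 0 1) * res (g.1 1 0))) := by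
        simp only [hC, coords, Units.val_mul, Matrix.mul_apply, Fin.sum_univ_two, map_add,
          map_mul, hadd, hmul, h10]
        ring
      rw [hW1, h11, sub_eq_self] at hW
      exact (mul_eq_zero.mp ((mul_eq_zero.mp hW).resolve_left hu)).resolve_right hd
    have hh : h ∈ B := (hB h).mpr (hinj _ h10 h10')
    rw [hψ h hh g]
    simp [chiR, h11]
  · intro hψ h hh g
    have h10 := (hB h).mp hh
    have h11 : res (h.1 1 1) ≠ 0 := by
      intro h1
      refine det_res_ne h ?_
      simp [Matrix.det_fin_two, h1, h10]
    rw [hψ g (h * g) (res (h.1 1 1)) h11]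
    · simp [chiR]
    · simp [hC, coords, Matrix.mul_apply, Fin.sum_univ_two, h10]
    · simp [hC, coords, Matrix.mul_apply, Fin.sum_univ_two, h10]
    · simp [hC, coords, Matrix.mul_apply, Fin.sum_univ_two, h10, hmul]
      ring

end Group

/-! ### The weights -/

section Weights

variable {p : ℕ}

lemma grpRep_pos (x : ℤ) : 1 ≤ grpRep p x := Nat.le_add_left _ _

lemma grpRep_le (hp : 2 ≤ p) (x : ℤ) : grpRep p x ≤ p - 1 := by
  have h1 := Int.emod_lt_of_pos (x - 1) (show (0 : ℤ) < (p : ℤ) - 1 by omega)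
  have h2 := Int.emod_nonneg (x - 1) (show (p : ℤ) - 1 ≠ 0 by omega)
  unfold grpRep
  omega

lemma dvd_grpRep_sub (hp : 2 ≤ p) (x : ℤ) : (p : ℤ) - 1 ∣ grpRep p x - x := by
  have h2 := Int.emod_nonneg (x - 1) (show (p : ℤ) - 1 ≠ 0 by omega)
  have h3 := Int.mul_ediv_add_emod (x - 1) ((p : ℤ) - 1)
  refine ⟨-((x - 1) / ((p : ℤ) - 1)), ?_⟩
  unfold grpRep
  push_cast
  rw [Int.toNat_of_nonneg h2]
  linear_combination h3

lemma eq_of_dvd_sub {m a b : ℤ} (h : m ∣ a - b) (h1 : a - b < m) (h2 : b - a < m) : a = b := by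
  by_contra hab
  have h3 := Int.le_of_dvd (abs_pos.mpr (sub_ne_zero.mpr hab)) ((dvd_abs m _).mpr h)
  rcases abs_cases (a - b) with h4 | h4 <;> omega

lemma eq_grpRep (hp : 2 ≤ p) {x : ℤ} {n : ℕ} (h1 : 1 ≤ n) (h2 : n ≤ p - 1)
    (h : (p : ℤ) - 1 ∣ n - x) : n = grpRep p x := by
  have h3 := grpRep_le hp x
  have h4 := grpRep_pos (p := p) x
  have h5 := dvd_sub h (dvd_grpRep_sub hp x)
  rw [sub_sub_sub_cancel_right] at h5
  exact_mod_cast eq_of_dvd_sub h5 (by omega) (by omega)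

lemma grpRep_lt (hp : 2 ≤ p) (hpo : Odd p) {x : ℤ} (hx : Odd x) : grpRep p x < p - 1 := by
  refine lt_of_le_of_ne (grpRep_le hp x) fun h => ?_
  have h1 := dvd_grpRep_sub hp x
  rw [h] at h1
  obtain ⟨a, ha⟩ := hpo
  obtain ⟨b, hb⟩ := hx
  have h2 : (2 : ℤ) ∣ ((p - 1 : ℕ) : ℤ) - x := dvd_trans ⟨a, by omega⟩ h1
  omega

/-- The degree of the forms added in step `2j + 1` of the filtration: the representative of
`r - 2j` in `{1, …, p - 1}`. -/
noncomputable def symExp (p r j : ℕ) : ℕ := grpRep p ((r : ℤ) - 2 * (j : ℤ))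

/-- The power of the determinant by which the forms of degree `p - 1 - symExp p r j` added in
step `2j + 2` of the filtration are twisted: the representative
of `r - j` in `{0, …, p - 2}`. -/
noncomputable def detExp (p r j : ℕ) : ℕ := (((r : ℤ) - j) % ((p : ℤ) - 1)).toNat

lemma detExp_lt (hp : 2 ≤ p) (r j : ℕ) : detExp p r j < p - 1 := by
  have h1 := Int.emod_lt_of_pos ((r : ℤ) - j) (show (0 : ℤ) < (p : ℤ) - 1 by omega)
  have h2 := Int.emod_nonneg ((r : ℤ) - j) (show (p : ℤ) - 1 ≠ 0 by omega)
  unfold detExp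
  omega

lemma dvd_detExp_sub (hp : 2 ≤ p) (r j : ℕ) : (p : ℤ) - 1 ∣ detExp p r j - (r - j) := by
  have h2 := Int.emod_nonneg ((r : ℤ) - j) (show (p : ℤ) - 1 ≠ 0 by omega)
  have h3 := Int.mul_ediv_add_emod ((r : ℤ) - j) ((p : ℤ) - 1)
  refine ⟨-(((r : ℤ) - j) / ((p : ℤ) - 1)), ?_⟩
  unfold detExp
  rw [Int.toNat_of_nonneg h2]
  linear_combination h3

lemma symExp_modEq (hp : 2 ≤ p) (r j : ℕ) : symExp p r j + 2 * j ≡ r [MOD p - 1] := by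
  have h := dvd_grpRep_sub hp ((r : ℤ) - 2 * (j : ℤ))
  refine Nat.ModEq.symm ((Nat.modEq_iff_dvd).mpr ?_)
  push_cast [Nat.cast_sub (show 1 ≤ p by omega)]
  obtain ⟨a, ha⟩ := h
  exact ⟨a, by unfold symExp; linear_combination ha⟩

lemma detExp_modEq (hp : 2 ≤ p) (r j : ℕ) :
    detExp p r j + (p - 1 - symExp p r j) ≡ j [MOD p - 1] := by
  have h := dvd_grpRep_sub hp ((r : ℤ) - 2 * (j : ℤ))
  have h2 := dvd_detExp_sub hp r j
  have h3 := grpRep_le hp ((r : ℤ) - 2 * (j : ℤ))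
  refine Nat.ModEq.symm ((Nat.modEq_iff_dvd).mpr ?_)
  push_cast [Nat.cast_sub (show 1 ≤ p by omega), symExp, Nat.cast_sub h3]
  obtain ⟨a, ha⟩ := h
  obtain ⟨b, hb⟩ := h2
  exact ⟨b - a + 1, by linear_combination hb - ha⟩

/-- The weight attached to the exponent `i` of the determinant. -/
noncomputable def weight (p r i : ℕ) : ℕ × ℕ := (i, grpRep p ((r : ℤ) - 2 * (i : ℤ)))

lemma weight_mod (hp : 2 ≤ p) (r j : ℕ) : (j % (p - 1), symExp p r j) = weight p r (j % (p - 1)) := by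
  refine Prod.ext rfl (eq_grpRep hp (grpRep_pos _) (grpRep_le hp _) ?_)
  have h := dvd_grpRep_sub hp ((r : ℤ) - 2 * (j : ℤ))
  have h2 : (p : ℤ) - 1 ∣ j - ((j % (p - 1) : ℕ) : ℤ) := by
    have := (Nat.modEq_iff_dvd).mp (Nat.mod_modEq j (p - 1))
    rwa [Nat.cast_sub (show 1 ≤ p by omega), Nat.cast_one] at this
  obtain ⟨a, ha⟩ := h
  obtain ⟨b, hb⟩ := h2
  exact ⟨a - 2 * b, by unfold symExp; linear_combination ha - 2 * hb⟩

lemma weight_detExp (hp : 2 ≤ p) (hpo : Odd p) {r : ℕ} (hr : Odd r) (j : ℕ) :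
    (detExp p r j, p - 1 - symExp p r j) = weight p r (detExp p r j) := by
  have h1 : symExp p r j < p - 1 := grpRep_lt hp hpo (by
    rw [Int.odd_sub]; simp [hr])
  refine Prod.ext rfl (eq_grpRep hp (by simp only; omega) (by simp only; omega) ?_)
  have h := dvd_grpRep_sub hp ((r : ℤ) - 2 * (j : ℤ))
  have h2 := dvd_detExp_sub hp r j
  simp only
  rw [Nat.cast_sub h1.le, Nat.cast_sub (show 1 ≤ p by omega)]
  obtain ⟨a, ha⟩ := h
  obtain ⟨b, hb⟩ := h2
  refine ⟨2 * b - a + 1, ?_⟩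
  unfold symExp
  push_cast
  linear_combination 2 * hb - ha

/-- The weight of the `i`-th graded piece. -/
noncomputable def wt (p r i : ℕ) : ℕ × ℕ :=
  if i % 2 = 0 then (i / 2 % (p - 1), symExp p r (i / 2))
  else (detExp p r (i / 2), p - 1 - symExp p r (i / 2))

lemma map_range_two_mul {α : Type} (f : ℕ → α) (n : ℕ) :
    (Multiset.range (2 * n)).map f = (Multiset.range n).map (fun j => f (2 * j)) +
      (Multiset.range n).map (fun j => f (2 * j + 1)) := by
  induction n with
  | zero => simp
  | succ n ih =>
    rw [show 2 * (n + 1) = 2 * n + 1 + 1 by ring, Multiset.range_succ, Multiset.range_succ,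
      Multiset.range_succ]
    simp only [Multiset.map_cons, ih]
    simp only [← Multiset.singleton_add]
    abel

lemma map_detExp (hp : 2 ≤ p) (r : ℕ) :
    (Multiset.range (p - 1)).map (detExp p r) = Multiset.range (p - 1) := by
  have hinj : Set.InjOn (detExp p r) (Finset.range (p - 1)) := by
    intro a ha b hb h
    simp only [Finset.coe_range, Set.mem_Iio] at ha hb
    have h1 := (dvd_detExp_sub hp r a).sub (dvd_detExp_sub hp r b)
    rw [h, sub_sub_sub_cancel_left, sub_sub_sub_cancel_left] at h1
    exact_mod_cast eq_of_dvd_sub h1 (by omega) (by omega)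
  have h2 : (Finset.range (p - 1)).image (detExp p r) = Finset.range (p - 1) := by
    refine Finset.eq_of_subset_of_card_le ?_ ?_
    · intro x hx
      obtain ⟨j, -, rfl⟩ := Finset.mem_image.mp hx
      exact Finset.mem_range.mpr (detExp_lt hp r j)
    · rw [Finset.card_image_of_injOn hinj]
  have h3 := Finset.image_val_of_injOn hinj
  rw [h2] at h3
  exact h3.symm

lemma range_weights (hp : 2 ≤ p) {ρ : ℕ} (h1 : 1 ≤ ρ) (h2 : ρ < p - 1) :
    Multiset.range (p - 1) = 0 ::ₘ ρ ::ₘ ((Finset.Icc 1 (p - 2)).erase ρ).val := by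
  have h : Finset.range (p - 1) = insert 0 (insert ρ ((Finset.Icc 1 (p - 2)).erase ρ)) := by
    ext x
    simp only [Finset.mem_range, Finset.mem_insert, Finset.mem_erase, Finset.mem_Icc]
    omega
  have h3 := congrArg Finset.val h
  rw [Finset.insert_val_of_notMem, Finset.insert_val_of_notMem] at h3
  · exact h3
  · simp
  · simp only [Finset.mem_insert, Finset.mem_erase, Finset.mem_Icc]
    omega

lemma map_wt (hp : 2 ≤ p) (hpo : Odd p) {r : ℕ} (hr : Odd r) :
    Multiset.map (wt p r) (Multiset.range (2 * p)) =
        Multiset.replicate 3 (0, grpRep p r) +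
        Multiset.replicate 3 (grpRep p r, p - 1 - grpRep p r) +
        2 • (((Finset.Icc 1 (p - 2)).erase (grpRep p r)).val.map
          (fun i : ℕ => ((i, grpRep p ((r : ℤ) - 2 * (i : ℤ))) : ℕ × ℕ))) := by
  have hρ : grpRep p r < p - 1 := grpRep_lt hp hpo (by exact_mod_cast hr)
  have hρ1 := grpRep_pos (p := p) r
  have he : ∀ j, wt p r (2 * j) = weight p r (j % (p - 1)) := fun j => by
    rw [← weight_mod hp]
    simp [wt]
  have ho : ∀ j, wt p r (2 * j + 1) = weight p r (detExp p r j) := fun j => by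
    rw [← weight_detExp hp hpo hr, wt, if_neg (by omega), show (2 * j + 1) / 2 = j by omega]
  have hsucc : Multiset.range p = (p - 1) ::ₘ Multiset.range (p - 1) := by
    rw [← Multiset.range_succ, Nat.succ_eq_add_one, show p - 1 + 1 = p by omega]
  have hE : (Multiset.range p).map (fun j => wt p r (2 * j)) =
      weight p r 0 ::ₘ (Multiset.range (p - 1)).map (weight p r) := by
    simp only [he]
    rw [hsucc, Multiset.map_cons, Nat.mod_self]
    congr 1
    refine Multiset.map_congr rfl fun j hj => ?_
    rw [Nat.mod_eq_of_lt (Multiset.mem_range.mp hj)]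
  have hO : (Multiset.range p).map (fun j => wt p r (2 * j + 1)) =
      weight p r (grpRep p r) ::ₘ (Multiset.range (p - 1)).map (weight p r) := by
    have h1 : detExp p r (p - 1) = grpRep p r := by
      have h2 := (dvd_detExp_sub hp r (p - 1)).sub (dvd_grpRep_sub hp r)
      have h3 := detExp_lt hp r (p - 1)
      rw [Nat.cast_sub (show 1 ≤ p by omega)] at h2
      have h4 : (p : ℤ) - 1 ∣ detExp p r (p - 1) - grpRep p r := by
        obtain ⟨a, ha⟩ := h2
        refine ⟨a - 1, ?_⟩
        push_cast at ha
        linear_combination ha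
      exact_mod_cast eq_of_dvd_sub h4 (by omega) (by omega)
    simp only [ho]
    rw [hsucc, Multiset.map_cons, h1]
    conv_rhs => rw [← map_detExp hp r, Multiset.map_map]
    rfl
  have h0 : weight p r 0 = (0, grpRep p r) := by simp [weight]
  have h1 : weight p r (grpRep p r) = (grpRep p r, p - 1 - grpRep p r) := by
    refine Prod.ext rfl (eq_grpRep hp (by simp only; omega) (by simp only; omega) ?_).symm
    have := dvd_grpRep_sub hp r
    simp only
    rw [Nat.cast_sub hρ.le, Nat.cast_sub (show 1 ≤ p by omega)]
    obtain ⟨a, ha⟩ := this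
    refine ⟨a + 1, ?_⟩
    push_cast
    linear_combination ha
  rw [map_range_two_mul, hE, hO, range_weights hp hρ1 hρ]
  change _ = _ + 2 • Multiset.map (weight p r) _
  simp only [Multiset.map_cons, h0, h1, two_nsmul, Multiset.replicate_succ,
    Multiset.replicate_zero]
  simp only [← Multiset.singleton_add]
  abel

end Weights

end PrincipalSeries

/-- Jordan–Hölder factors of `V_{2,r} = Ind_{B₂}^{G₂} χ_r` in the totally ramified case.
Here `R = O/m²` for `F/ℚ_p` totally ramified of degree `e ≥ 2` (so `R` is a finite
chain ring with `ϖ² = 0 ≠ ϖ`, residue field `𝔽_p`, and `p = 0` in `R`), `p ≥ 5`, and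
`r ∈ ℤ/(p−1)ℤ` is odd.  The conclusion: `V_{2,r}` has a `G₂`-stable filtration of
length `2p` whose graded pieces are the Serre weights `det^s ⊗ Sym^t E²` (realized as
homogeneous polynomials of degree `t` in two variables with the substitution action,
twisted by `det^s`), the multiset of weights `(s,t)` being: `(0, (r))` three times,
`((r), p−1−(r))` three times, and `(i, (r−2i))` twice for each
`i ∈ {1,…,p−2} ∖ {(r)}`, where `(x)` denotes the representative in `{1,…,p−1}`. -/
theorem stmt_18 (p : ℕ) [Fact p.Prime] (hp5 : 5 ≤ p)
    (R E : Type) [CommRing R] [IsLocalRing R] [Fintype R] [Field E]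
    [Algebra (IsLocalRing.ResidueField R) E]
    (ϖ : R) (hspan : IsLocalRing.maximalIdeal R = Ideal.span {ϖ})
    (hnil : ϖ ^ 2 = 0) (hne : ϖ ≠ 0)
    (hq : Nat.card (IsLocalRing.ResidueField R) = p)
    (hp0 : (p : R) = 0)
    (B : Subgroup (GL (Fin 2) R))
    (hB : ∀ g : GL (Fin 2) R, g ∈ B ↔ (g : Matrix (Fin 2) (Fin 2) R) 1 0 = 0)
    (r : ℕ) (hodd : Odd r) :
    ∃ (W : ℕ → Submodule E (GL (Fin 2) R → E)) (wt : ℕ → ℕ × ℕ)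
      (φ : ℕ → ((GL (Fin 2) R → E) →ₗ[E] MvPolynomial (Fin 2) E)),
      W 0 = ⊥ ∧
      W (2 * p) = indRep E B (chiR R E r) ∧
      (∀ i : ℕ, ∀ x : GL (Fin 2) R, ∀ ψ ∈ W i, rightTransl E x ψ ∈ W i) ∧
      (∀ i < 2 * p,
        W i ≤ W (i + 1) ∧
        (∀ ψ ∈ W (i + 1), φ i ψ ∈ MvPolynomial.homogeneousSubmodule (Fin 2) E (wt i).2) ∧
        (∀ ψ ∈ W (i + 1), (φ i ψ = 0 ↔ ψ ∈ W i)) ∧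
        (∀ P ∈ MvPolynomial.homogeneousSubmodule (Fin 2) E (wt i).2,
          ∃ ψ ∈ W (i + 1), φ i ψ = P) ∧
        (∀ ψ ∈ W (i + 1), ∀ g : GL (Fin 2) R,
          φ i (rightTransl E g ψ) =
            (matE R E g).det ^ (wt i).1 • polyAct E (matE R E g) (φ i ψ))) ∧
      Multiset.map wt (Multiset.range (2 * p)) =
        Multiset.replicate 3 (0, grpRep p r) +
        Multiset.replicate 3 (grpRep p r, p - 1 - grpRep p r) +
        2 • (((Finset.Icc 1 (p - 2)).erase (grpRep p r)).val.map
          (fun i : ℕ => ((i, grpRep p ((r : ℤ) - 2 * (i : ℤ))) : ℕ × ℕ))) := by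
  classical
  have hp : p.Prime := Fact.out
  have hpo : Odd p := hp.odd_of_ne_two (by omega)
  have h2 : 2 ≤ p := hp.two_le
  have : Finite (IsLocalRing.ResidueField R) := Nat.finite_of_card_ne_zero (by omega)
  have : Fintype (IsLocalRing.ResidueField R) := Fintype.ofFinite _
  have hk : Fintype.card (IsLocalRing.ResidueField R) = p := by
    rw [← Nat.card_eq_fintype_card, hq]
  have hpk : (p : IsLocalRing.ResidueField R) = 0 := by
    rw [← map_natCast (IsLocalRing.residue R), hp0, map_zero]
  have : CharP E p := by
    have h1 : (p : E) = 0 := by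
      rw [← map_natCast (algebraMap (IsLocalRing.ResidueField R) E), hpk, map_zero]
    obtain ⟨q, hqE⟩ := CharP.exists E
    rcases (Nat.dvd_prime hp).mp ((CharP.cast_eq_zero_iff E q p).mp h1) with rfl | rfl
    · exact absurd rfl (CharP.char_ne_one E 1)
    · exact hqE
  obtain ⟨δ, hadd, hmul, hsurj, hinj⟩ := PrincipalSeries.exists_delta p R ϖ hspan hnil hne
    (fun a => by rw [← hk, FiniteField.pow_card]) hp0
  set C := PrincipalSeries.coords δ hadd hmul hsurj
  have hs : ∀ j, PrincipalSeries.symExp p r j < p - 1 := fun j =>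
    PrincipalSeries.grpRep_lt h2 hpo (by rw [Int.odd_sub]; simp [hodd])
  refine ⟨C.filt p r (PrincipalSeries.symExp p r) E, PrincipalSeries.wt p r,
    fun i => if i % 2 = 0 then C.projSym E p (i / 2) (PrincipalSeries.symExp p r (i / 2))
      else C.projQuot E p (i / 2) (p - 1 - PrincipalSeries.symExp p r (i / 2)),
    C.filt_zero, C.filt_top h2 hk (PrincipalSeries.mem_indRep_iff δ hadd hmul hsurj hinj hB r),
    fun i x ψ hψ => C.filt_stable i x hψ, fun i hi => ⟨C.filt_mono (Nat.le_succ i), ?_⟩,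
    PrincipalSeries.map_wt h2 hpo hodd⟩
  obtain ⟨j, rfl | rfl⟩ : ∃ j, i = 2 * j ∨ i = 2 * j + 1 := ⟨i / 2, by omega⟩
  · simp only [PrincipalSeries.wt, show 2 * j % 2 = 0 by omega, show 2 * j / 2 = j by omega,
      if_true]
    exact C.step_even hk (by omega) (hs j) (PrincipalSeries.symExp_modEq h2 r j)
      (Nat.mod_modEq j (p - 1))
  · have hj := hs j
    have hj1 : 1 ≤ PrincipalSeries.symExp p r j := PrincipalSeries.grpRep_pos _
    simp only [PrincipalSeries.wt, show (2 * j + 1) / 2 = j by omega,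
      show (2 * j + 1) % 2 = 1 by omega, one_ne_zero, if_false]
    exact C.step_odd hk (by omega) hj1 (by omega) (by omega)
      (PrincipalSeries.symExp_modEq h2 r j) (PrincipalSeries.detExp_modEq h2 r j)
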